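/- Let G be a finite group acting by ring automorphisms on a commutative ring S such that the order of G is invertible in S, let R = S^G be the subring of G-invariant elements, and let I be an ideal of R. Then G acts on the quotient ring S/IS (where IS is the ideal of S generated by I), and the natural ring homomorphism R/I → (S/IS)^G induced by the inclusion R → S is an isomorphism. -/

import Mathlib

variable {S : Type*} [CommRing S]

/-- For an ideal `I` of a subring `R ⊆ S`, the ideal `IS` of `S` generated by `I`. -/
def extendedIdeal (R : Subring S) (I : Ideal R) : Ideal S :=
  I.map R.subtype

/-- The natural ring homomorphism `R/I → S/IS` induced by the inclusion `R → S`. -/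
noncomputable def natQuotientMap (R : Subring S) (I : Ideal R) :
    R ⧸ I →+* S ⧸ extendedIdeal R I :=
  Ideal.Quotient.lift I ((Ideal.Quotient.mk (extendedIdeal R I)).comp R.subtype)
    (fun r hr => by
      exact Ideal.Quotient.eq_zero_iff_mem.mpr (Ideal.mem_map_of_mem R.subtype hr))

/-- Let a finite group `G` act by ring automorphisms on a commutative ring
`S` with `|G|` invertible in `S`, let `R = S^G` be the subring of invariants and `I` an ideal
of `R`. Then `G` acts on `S/IS` (the ideal `IS` is `G`-stable, so the action descends), and
the natural ring homomorphism `R/I → (S/IS)^G` is an isomorphism: `natQuotientMap R I` is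
injective and its range is exactly the set of `G`-invariant elements of `S/IS` (described via
representatives, i.e. the fixed points of the descended action). -/
theorem quotient_fixed_points_iso (G : Type*) [Group G] [Fintype G] [MulSemiringAction G S]
    (hcard : IsUnit ((Fintype.card G : ℕ) : S))
    (R : Subring S) (hR : ∀ s : S, s ∈ R ↔ ∀ g : G, g • s = s) (I : Ideal R) :
    (∀ (g : G), ∀ s ∈ extendedIdeal R I, g • s ∈ extendedIdeal R I) ∧
      Function.Injective (natQuotientMap R I) ∧
      Set.range (natQuotientMap R I) =
        {x : S ⧸ extendedIdeal R I | ∀ (g : G) (s : S),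
          Ideal.Quotient.mk (extendedIdeal R I) s = x →
            Ideal.Quotient.mk (extendedIdeal R I) (g • s) = x} := by
  classical
  obtain ⟨u, hu⟩ := hcard
  obtain ⟨c, hc⟩ : ∃ c : S, c * ((Fintype.card G : ℕ) : S) = 1 :=
    ⟨((u⁻¹ : Sˣ) : S), by rw [← hu]; exact u.inv_mul⟩
  have hnat : ∀ (g : G) (n : ℕ), g • (n : S) = (n : S) := fun g n =>
    map_natCast (MulSemiringAction.toRingHom G S g) n
  have hcR : c ∈ R := by
    rw [hR]
    intro g
    have h1 : (g • c) * ((Fintype.card G : ℕ) : S) = 1 := by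
      have h2 := congrArg (fun x => g • x) hc
      simpa only [smul_mul', hnat, smul_one] using h2
    calc g • c = (g • c) * (c * ((Fintype.card G : ℕ) : S)) := by rw [hc, mul_one]
      _ = ((g • c) * ((Fintype.card G : ℕ) : S)) * c := by ring
      _ = c := by rw [h1, one_mul]
  have hT : ∀ s : S, (∑ g : G, g • s) ∈ R := by
    intro s
    rw [hR]
    intro g
    rw [Finset.smul_sum]
    simp only [smul_smul]
    exact Fintype.sum_equiv (Equiv.mulLeft g) _ _ (fun _ => rfl)
  have hstab : ∀ (g : G), ∀ s ∈ extendedIdeal R I, g • s ∈ extendedIdeal R I := by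
    intro g s hs
    have hle : extendedIdeal R I ≤
        (extendedIdeal R I).comap (MulSemiringAction.toRingHom G S g) := by
      refine Ideal.map_le_iff_le_comap.mpr ?_
      intro r hr
      change g • (r : S) ∈ extendedIdeal R I
      rw [(hR r).1 r.2 g]
      exact Ideal.mem_map_of_mem R.subtype hr
    exact hle hs
  have key : ∀ s ∈ extendedIdeal R I, (⟨∑ g : G, g • s, hT s⟩ : R) ∈ I := by
    intro s hs
    suffices H : ∀ a : S, (⟨∑ g : G, g • (a * s), hT (a * s)⟩ : R) ∈ I by
      simpa only [one_mul] using H 1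
    refine Submodule.span_induction
      (p := fun s _ => ∀ a : S, (⟨∑ g : G, g • (a * s), hT (a * s)⟩ : R) ∈ I) ?_ ?_ ?_ ?_ hs
    · rintro _ ⟨r, hr, rfl⟩ a
      have : (⟨∑ g : G, g • (a * R.subtype r), hT _⟩ : R) = ⟨∑ g : G, g • a, hT a⟩ * r := by
        apply Subtype.ext
        have h : ∀ g : G, g • (r : S) = r := (hR r).1 r.2
        simp [h, smul_mul', Finset.sum_mul]
      rw [this]
      exact I.mul_mem_left _ hr
    · intro a
      convert I.zero_mem
      simp
    · intro x y _ _ hx hy a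
      convert I.add_mem (hx a) (hy a)
      simp [mul_add, Finset.sum_add_distrib]
    · intro b x _ hx a
      have := hx (a * b)
      simpa only [smul_eq_mul, mul_assoc] using this
  refine ⟨hstab, ?_, ?_⟩
  · rw [injective_iff_map_eq_zero]
    intro x hx
    obtain ⟨r, rfl⟩ := Ideal.Quotient.mk_surjective x
    have hr : (r : S) ∈ extendedIdeal R I := Ideal.Quotient.eq_zero_iff_mem.mp hx
    rw [Ideal.Quotient.eq_zero_iff_mem]
    have h : ∀ g : G, g • (r : S) = r := (hR r).1 r.2
    have : r = ⟨c, hcR⟩ * (⟨∑ g : G, g • (r : S), hT r⟩ : R) := by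
      apply Subtype.ext
      simp [h, ← mul_assoc, hc]
    rw [this]
    exact I.mul_mem_left _ (key _ hr)
  · ext x
    constructor
    · rintro ⟨y, rfl⟩ g s hs
      obtain ⟨r, rfl⟩ := Ideal.Quotient.mk_surjective y
      change Ideal.Quotient.mk (extendedIdeal R I) s =
        Ideal.Quotient.mk (extendedIdeal R I) (r : S) at hs
      change _ = Ideal.Quotient.mk (extendedIdeal R I) (r : S)
      rw [Ideal.Quotient.eq] at hs ⊢
      have := hstab g _ hs
      rwa [smul_sub, (hR r).1 r.2 g] at this
    · intro hx
      obtain ⟨s, rfl⟩ := Ideal.Quotient.mk_surjective x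
      refine ⟨Ideal.Quotient.mk I (⟨c, hcR⟩ * ⟨∑ g : G, g • s, hT s⟩), ?_⟩
      change Ideal.Quotient.mk (extendedIdeal R I) (c * ∑ g : G, g • s) = _
      have h : ∀ g : G, Ideal.Quotient.mk (extendedIdeal R I) (g • s) =
        Ideal.Quotient.mk (extendedIdeal R I) s := fun g => hx g s rfl
      rw [map_mul, map_sum, Finset.sum_congr rfl (fun g _ => h g), Finset.sum_const,
        Finset.card_univ, nsmul_eq_mul, ← map_natCast (Ideal.Quotient.mk (extendedIdeal R I)),
        ← map_mul, ← map_mul, ← mul_assoc, hc, one_mul]
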